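/- For every ε ∈ (0, 1/2) there exists a constant C > 0 such that for every δ ∈ (0, 1], every a ∈ ℝ, and every measurable f : ℝ → ℂ with ∫_ℝ (1 + |τ − a|) |f(τ)|² dτ < ∞, one has ‖ K_δ * f ‖_{L²(ℝ)} ≤ C δ^{1/2 − ε} ( ∫_ℝ (1 + |τ − a|) |f(τ)|² dτ )^{1/2}, where K_δ(τ) = 2 sin(δτ)/τ and * denotes convolution on ℝ. -/

import Mathlib

open MeasureTheory

/-! Choose `p` with `1 / p = 1 / 2 + ε`, let `p'` be its conjugate exponent and put
`1 / q = 1 / p' + 1 / 2`. Young's inequality `L^p * L^q → L^2` bounds `‖K_δ * f‖₂` by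
`‖K_δ‖_p ‖f‖_q`. As `K_δ(τ) = δ K_1(δ τ)`, the first factor equals
`δ ^ (1 - 1 / p) ‖K_1‖_p = δ ^ (1 / 2 - ε) ‖K_1‖_p`, and it is finite because
`|K_1(τ)| ≲ 1 / (1 + |τ|)` and `p > 1`. For the second, Hölder's inequality gives
`‖f‖_q ≤ ‖(1 + |τ - a|) ^ (-1 / 2)‖_{p'} ‖(1 + |τ - a|) ^ (1 / 2) f‖₂`, where the weight lies in
`L^{p'}` because `p' > 2`, with a norm that translation invariance makes independent of `a`. -/

open ContinuousLinearMap Module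
open scoped Convolution ENNReal

section Convolution

variable {G : Type*} [MeasurableSpace G] {μ : Measure G}

section AddGroup

variable [AddGroup G] [MeasurableNeg G] [μ.IsAddLeftInvariant]

theorem lintegral_comp_neg_add_eq_self [MeasurableAdd G] [μ.IsNegInvariant]
    (f : G → ℝ≥0∞) (x : G) :
    ∫⁻ y, f (-y + x) ∂μ = ∫⁻ y, f y ∂μ := by
  rw [← lintegral_neg_eq_self f, ← lintegral_add_left_eq_self (fun y => f (-y)) (-x)]
  simp only [neg_add_rev, neg_neg]

theorem lintegral_lconvolution [MeasurableAdd₂ G] [SFinite μ] {f g : G → ℝ≥0∞}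
    (hf : AEMeasurable f μ) (hg : AEMeasurable g μ) :
    ∫⁻ x, (f ⋆ₗ[μ] g) x ∂μ = (∫⁻ x, f x ∂μ) * ∫⁻ x, g x ∂μ := by
  simp only [lconvolution_def]
  rw [lintegral_lintegral_swap (by fun_prop), ← lintegral_mul_const'' _ hf]
  refine lintegral_congr fun y => ?_
  have measurable_translate : AEMeasurable (fun x => g (-y + x)) μ :=
    hg.comp_quasiMeasurePreserving (measurePreserving_add_left μ (-y)).quasiMeasurePreserving
  rw [lintegral_const_mul'' _ measurable_translate, lintegral_add_left_eq_self g]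

variable [MeasurableAdd₂ G] [μ.IsNegInvariant] [SFinite μ] {p q r : ℝ} {f g : G → ℝ≥0∞}

/-- The integrand splits as `f g = (f ^ p g ^ q) ^ r⁻¹ (f ^ p) ^ (p⁻¹ - r⁻¹) (g ^ q) ^ (q⁻¹ - r⁻¹)`,
to which Hölder's inequality for three functions applies. -/
theorem lconvolution_le_rpow_mul (hp : 1 ≤ p) (hq : 1 ≤ q) (hr : 0 < r)
    (hpqr : p⁻¹ + q⁻¹ = 1 + r⁻¹) (hf : AEMeasurable f μ) (hg : AEMeasurable g μ) (x : G) :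
    (f ⋆ₗ[μ] g) x ≤ ((fun y => f y ^ p) ⋆ₗ[μ] fun y => g y ^ q) x ^ r⁻¹ *
      ((∫⁻ y, f y ^ p ∂μ) ^ (p⁻¹ - r⁻¹) * (∫⁻ y, g y ^ q ∂μ) ^ (q⁻¹ - r⁻¹)) := by
  have hpr : 0 ≤ p⁻¹ - r⁻¹ := by linarith [inv_le_one_of_one_le₀ hq]
  have hqr : 0 ≤ q⁻¹ - r⁻¹ := by linarith [inv_le_one_of_one_le₀ hp]
  have rpow_split (a : ℝ≥0∞) {s : ℝ} (hs : 1 ≤ s) (hsr : 0 ≤ s⁻¹ - r⁻¹) :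
      a = (a ^ s) ^ r⁻¹ * (a ^ s) ^ (s⁻¹ - r⁻¹) := by
    rw [← ENNReal.rpow_add_of_nonneg _ _ (inv_nonneg.2 hr.le) hsr, add_sub_cancel,
      ENNReal.rpow_rpow_inv (by positivity)]
  have hgx : AEMeasurable (fun y => g (-y + x)) μ := by fun_prop
  have hoelder := ENNReal.lintegral_mul_prod_norm_pow_le (μ := μ) Finset.univ
    (g := fun y => f y ^ p * g (-y + x) ^ q) (f := ![fun y => f y ^ p, fun y => g (-y + x) ^ q])
    (p := ![p⁻¹ - r⁻¹, q⁻¹ - r⁻¹]) (by fun_prop)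
    (Fin.forall_fin_two.2 ⟨fun _ => hf.pow_const p, fun _ => hgx.pow_const q⟩) r⁻¹
    (by simp only [Fin.sum_univ_two, Matrix.cons_val_zero, Matrix.cons_val_one]; linarith)
    (inv_nonneg.2 hr.le) (Fin.forall_fin_two.2 ⟨fun _ => hpr, fun _ => hqr⟩)
  simp only [Fin.prod_univ_two, Matrix.cons_val_zero, Matrix.cons_val_one,
    lintegral_comp_neg_add_eq_self (fun y => g y ^ q) x] at hoelder
  refine (lintegral_congr fun y => ?_).trans_le hoelder
  rw [ENNReal.mul_rpow_of_nonneg _ _ (inv_nonneg.2 hr.le), mul_mul_mul_comm,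
    ← rpow_split _ hp hpr, ← rpow_split _ hq hqr]

theorem lintegral_lconvolution_rpow_le (hp : 1 ≤ p) (hq : 1 ≤ q) (hr : 0 < r)
    (hpqr : p⁻¹ + q⁻¹ = 1 + r⁻¹) (hf : AEMeasurable f μ) (hg : AEMeasurable g μ) :
    (∫⁻ x, (f ⋆ₗ[μ] g) x ^ r ∂μ) ^ r⁻¹ ≤
      (∫⁻ x, f x ^ p ∂μ) ^ p⁻¹ * (∫⁻ x, g x ^ q ∂μ) ^ q⁻¹ := by
  have hpr : 0 ≤ p⁻¹ - r⁻¹ := by linarith [inv_le_one_of_one_le₀ hq]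
  have hqr : 0 ≤ q⁻¹ - r⁻¹ := by linarith [inv_le_one_of_one_le₀ hp]
  have hr' : 0 ≤ r⁻¹ := inv_nonneg.2 hr.le
  set A := ∫⁻ x, f x ^ p ∂μ
  set B := ∫⁻ x, g x ^ q ∂μ
  calc (∫⁻ x, (f ⋆ₗ[μ] g) x ^ r ∂μ) ^ r⁻¹
      ≤ (∫⁻ x, ((fun y => f y ^ p) ⋆ₗ[μ] fun y => g y ^ q) x *
          (A ^ (p⁻¹ - r⁻¹) * B ^ (q⁻¹ - r⁻¹)) ^ r ∂μ) ^ r⁻¹ := by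
        gcongr with x
        refine (ENNReal.rpow_le_rpow (lconvolution_le_rpow_mul hp hq hr hpqr hf hg x)
          hr.le).trans_eq ?_
        rw [ENNReal.mul_rpow_of_nonneg _ _ hr.le, ENNReal.rpow_inv_rpow hr.ne']
    _ = (A * B) ^ r⁻¹ * (A ^ (p⁻¹ - r⁻¹) * B ^ (q⁻¹ - r⁻¹)) := by
        rw [lintegral_mul_const'' _ (by fun_prop),
          lintegral_lconvolution (by fun_prop) (by fun_prop),
          ENNReal.mul_rpow_of_nonneg _ _ hr', ENNReal.rpow_rpow_inv hr.ne']
    _ = A ^ p⁻¹ * B ^ q⁻¹ := by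
        rw [ENNReal.mul_rpow_of_nonneg _ _ hr', mul_mul_mul_comm,
          ← ENNReal.rpow_add_of_nonneg _ _ hr' hpr, ← ENNReal.rpow_add_of_nonneg _ _ hr' hqr,
          add_sub_cancel, add_sub_cancel]

end AddGroup

theorem eLpNorm_ofReal_eq_lintegral_rpow_enorm {α ε : Type*} [MeasurableSpace α] {μ : Measure α}
    [ENorm ε] (f : α → ε) {p : ℝ} (hp : 0 < p) :
    eLpNorm f (.ofReal p) μ = (∫⁻ x, ‖f x‖ₑ ^ p ∂μ) ^ p⁻¹ := by
  rw [eLpNorm_eq_lintegral_rpow_enorm_toReal (by simpa using hp) ENNReal.ofReal_ne_top,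
    ENNReal.toReal_ofReal hp.le, one_div]

variable [AddCommGroup G] {𝕜 E F E' : Type*} [NontriviallyNormedField 𝕜]
  [NormedAddCommGroup E] [NormedSpace 𝕜 E] [NormedAddCommGroup F] [NormedSpace 𝕜 F]
  [NormedAddCommGroup E'] [NormedSpace 𝕜 E'] [NormedSpace ℝ E']
  (L : E →L[𝕜] F →L[𝕜] E') {f : G → E} {g : G → F}

theorem enorm_convolution_le (x : G) :
    ‖(f ⋆[L, μ] g) x‖ₑ ≤ ‖L‖ₑ * ((‖f ·‖ₑ) ⋆ₗ[μ] (‖g ·‖ₑ)) x := by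
  rw [convolution_def, lconvolution_def, ← lintegral_const_mul' _ _ enorm_ne_top]
  refine (enorm_integral_le_lintegral_enorm _).trans (lintegral_mono fun y => ?_)
  rw [neg_add_eq_sub, ← mul_assoc]
  exact L.le_opENorm₂ _ _

theorem eLpNorm_convolution_le [MeasurableAdd₂ G] [MeasurableNeg G]
    [μ.IsAddLeftInvariant] [μ.IsNegInvariant] [SFinite μ] {p q r : ℝ} (hp : 1 ≤ p) (hq : 1 ≤ q)
    (hr : 0 < r) (hpqr : p⁻¹ + q⁻¹ = 1 + r⁻¹)
    (hf : AEStronglyMeasurable f μ) (hg : AEStronglyMeasurable g μ) :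
    eLpNorm (f ⋆[L, μ] g) (.ofReal r) μ ≤
      ‖L‖ₑ * (eLpNorm f (.ofReal p) μ * eLpNorm g (.ofReal q) μ) := by
  have young := lintegral_lconvolution_rpow_le hp hq hr hpqr hf.enorm hg.enorm
  rw [eLpNorm_ofReal_eq_lintegral_rpow_enorm f (by positivity),
    eLpNorm_ofReal_eq_lintegral_rpow_enorm g (by positivity)]
  have measurable_lconvolution : AEMeasurable ((‖f ·‖ₑ) ⋆ₗ[μ] (‖g ·‖ₑ)) μ :=
    aemeasurable_lconvolution hf.enorm hg.enorm
  refine (eLpNorm_le_mul_eLpNorm_of_ae_le_mul'' _ measurable_lconvolution.aestronglyMeasurable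
    (.of_forall (enorm_convolution_le L))).trans ?_
  gcongr
  rwa [eLpNorm_ofReal_eq_lintegral_rpow_enorm _ hr]

end Convolution

theorem eLpNorm_comp_const_smul {F E : Type*} [NormedAddCommGroup F] [NormedSpace ℝ F]
    [MeasurableSpace F] [BorelSpace F] [FiniteDimensional ℝ F] [NormedAddCommGroup E]
    (μ : Measure F) [μ.IsAddHaarMeasure] (f : F → E) (p : ℝ≥0∞) {c : ℝ} (hc : c ≠ 0) :
    eLpNorm (fun x => f (c • x)) p μ =
      ENNReal.ofReal |(c ^ finrank ℝ F)⁻¹| ^ p⁻¹.toReal * eLpNorm f p μ := by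
  have scaling := (measurableEmbedding_const_smul₀ (α := F) hc).eLpNorm_map_measure
    (μ := μ) (p := p) (g := f)
  have factor_ne_zero : ENNReal.ofReal |(c ^ finrank ℝ F)⁻¹| ≠ 0 := by
    simpa using pow_pos (abs_pos.2 hc) _
  rw [Measure.map_addHaar_smul μ hc, eLpNorm_smul_measure_of_ne_zero factor_ne_zero, smul_eq_mul,
    one_div] at scaling
  exact scaling.symm

section Weight

variable {F : Type*} [NormedAddCommGroup F] [MeasurableSpace F] [BorelSpace F]

theorem memLp_one_add_norm_rpow_neg [NormedSpace ℝ F] [FiniteDimensional ℝ F] (μ : Measure F)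
    [μ.IsAddHaarMeasure] {p : ℝ≥0∞} {s : ℝ} (hp : finrank ℝ F < s * p.toReal) :
    MemLp (fun x : F => (1 + ‖x‖) ^ (-s)) p μ := by
  have p_toReal_ne_zero : p.toReal ≠ 0 := by
    intro h
    rw [h, mul_zero] at hp
    exact hp.not_ge (Nat.cast_nonneg _)
  have measurable_weight : Measurable fun x : F => (1 + ‖x‖) ^ (-s) := by fun_prop
  rw [← integrable_norm_rpow_iff measurable_weight.aestronglyMeasurable
    (ENNReal.toReal_ne_zero.1 p_toReal_ne_zero).1 (ENNReal.toReal_ne_zero.1 p_toReal_ne_zero).2]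
  refine (integrable_one_add_norm hp).congr (.of_forall fun x => ?_)
  dsimp only
  rw [Real.norm_of_nonneg (by positivity), ← Real.rpow_mul (by positivity), neg_mul]

theorem eLpNorm_le_eLpNorm_one_add_norm_rpow_mul {E : Type*} [NormedAddCommGroup E]
    [NormedSpace ℝ E] {μ : Measure F} [μ.IsAddRightInvariant] {p q r : ℝ≥0∞}
    [ENNReal.HolderTriple p q r] (s : ℝ) (a : F) {f : F → E} (hf : AEStronglyMeasurable f μ) :
    eLpNorm f r μ ≤ eLpNorm (fun x : F => (1 + ‖x‖) ^ (-s)) p μ *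
      eLpNorm (fun x => (1 + ‖x - a‖) ^ s • f x) q μ := by
  have measurable_weight (t : ℝ) : Measurable fun x : F => (1 + ‖x‖) ^ t := by fun_prop
  have factor : f = (fun x => (1 + ‖x - a‖) ^ (-s)) • fun x => (1 + ‖x - a‖) ^ s • f x := by
    ext x
    dsimp only [Pi.smul_apply']
    rw [smul_smul, ← Real.rpow_add (by positivity), neg_add_cancel, Real.rpow_zero, one_smul]
  have measurable_translate (t : ℝ) : Measurable fun x : F => (1 + ‖x - a‖) ^ t :=
    (measurable_weight t).comp (measurable_sub_const a)
  have eLpNorm_translate := eLpNorm_comp_measurePreserving (p := p)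
    (measurable_weight (-s)).aestronglyMeasurable (measurePreserving_sub_right μ a)
  rw [← eLpNorm_translate]
  conv_lhs => rw [factor]
  exact eLpNorm_smul_le_mul_eLpNorm ((measurable_translate s).aestronglyMeasurable.smul hf)
    (measurable_translate (-s)).aestronglyMeasurable

theorem eLpNorm_two_rpow_half_smul {α E : Type*} [MeasurableSpace α] [NormedAddCommGroup E]
    [NormedSpace ℝ E] (μ : Measure α) {w : α → ℝ} (hw : 0 ≤ w) (f : α → E) :
    eLpNorm (fun x => w x ^ (1 / 2 : ℝ) • f x) 2 μ =
      (∫⁻ x, ENNReal.ofReal (w x * ‖f x‖ ^ 2) ∂μ) ^ (1 / 2 : ℝ) := by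
  rw [eLpNorm_eq_lintegral_rpow_enorm_toReal two_ne_zero ENNReal.ofNat_ne_top,
    ENNReal.toReal_ofNat]
  congr 2 with x
  rw [← ofReal_norm, ENNReal.ofReal_rpow_of_nonneg (norm_nonneg _) zero_le_two, Real.rpow_two,
    norm_smul, mul_pow, ← Real.sqrt_eq_rpow, Real.norm_of_nonneg (Real.sqrt_nonneg _),
    Real.sq_sqrt (hw x)]

end Weight

/-- The Fourier transform `τ ↦ ∫ t in -δ..δ, exp (-i t τ)` of the time cutoff to `[-δ, δ]`, with
the junk value `0` instead of `2 δ` at the origin. -/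
noncomputable def timeCutoffKernel (δ τ : ℝ) : ℝ := 2 * Real.sin (δ * τ) / τ

@[fun_prop]
theorem measurable_timeCutoffKernel (δ : ℝ) : Measurable (timeCutoffKernel δ) := by
  unfold timeCutoffKernel
  fun_prop

theorem abs_timeCutoffKernel_one_le (τ : ℝ) : |timeCutoffKernel 1 τ| ≤ 4 * (1 + |τ|)⁻¹ := by
  rw [timeCutoffKernel, one_mul]
  rcases eq_or_ne τ 0 with rfl | hτ
  · simp
  have abs_sin_le : |Real.sin τ| ≤ |τ| := Real.abs_sin_le_abs
  rw [abs_div, abs_mul, abs_two, ← div_eq_mul_inv, div_le_div_iff₀ (abs_pos.2 hτ) (by positivity)]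
  nlinarith [mul_le_mul_of_nonneg_right (Real.abs_sin_le_one τ) (abs_nonneg τ)]

theorem memLp_timeCutoffKernel_one {p : ℝ≥0∞} (hp : 1 < p.toReal) :
    MemLp (timeCutoffKernel 1) p := by
  have memLp_inv : MemLp (fun τ : ℝ => (1 + ‖τ‖) ^ (-1 : ℝ)) p :=
    memLp_one_add_norm_rpow_neg volume (by simpa using hp)
  refine memLp_inv.of_le_mul (c := 4) (by fun_prop) (.of_forall fun τ => ?_)
  rw [Real.rpow_neg_one, Real.norm_of_nonneg (by positivity : 0 ≤ (1 + ‖τ‖)⁻¹)]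
  exact abs_timeCutoffKernel_one_le τ

theorem timeCutoffKernel_eq_mul_timeCutoffKernel_one (δ τ : ℝ) :
    timeCutoffKernel δ τ = δ * timeCutoffKernel 1 (δ * τ) := by
  rcases eq_or_ne δ 0 with rfl | hδ
  · simp [timeCutoffKernel]
  · rw [timeCutoffKernel, timeCutoffKernel, one_mul, ← mul_div_assoc, mul_div_mul_left _ _ hδ]

theorem eLpNorm_timeCutoffKernel {δ : ℝ} (hδ : 0 < δ) (p : ℝ≥0∞) :
    eLpNorm (timeCutoffKernel δ) p =
      ENNReal.ofReal (δ ^ (1 - p⁻¹.toReal)) * eLpNorm (timeCutoffKernel 1) p := by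
  have dilation : timeCutoffKernel δ = δ • fun τ => timeCutoffKernel 1 (δ • τ) :=
    funext (timeCutoffKernel_eq_mul_timeCutoffKernel_one δ)
  rw [dilation, eLpNorm_const_smul, eLpNorm_comp_const_smul volume _ p hδ.ne', finrank_self,
    pow_one, abs_of_pos (inv_pos.2 hδ), ← mul_assoc, Real.enorm_of_nonneg hδ.le,
    ENNReal.ofReal_rpow_of_pos (inv_pos.2 hδ), ← ENNReal.ofReal_mul hδ.le, Real.inv_rpow hδ.le,
    ← div_eq_mul_inv, Real.rpow_sub hδ, Real.rpow_one]

variable {E : Type*} [NormedAddCommGroup E] [NormedSpace ℝ E]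

theorem eLpNorm_two_integral_timeCutoffKernel_smul_le {p p' : ℝ} (hpp' : p.HolderConjugate p')
    (hp2 : p ≤ 2) {δ : ℝ} (hδ : 0 < δ) (a : ℝ) {f : ℝ → E} (hf : AEStronglyMeasurable f) :
    eLpNorm (fun τ => ∫ σ, timeCutoffKernel δ (τ - σ) • f σ) 2 ≤
      ENNReal.ofReal (δ ^ p'⁻¹) * (eLpNorm (timeCutoffKernel 1) (.ofReal p) *
          eLpNorm (fun τ : ℝ => (1 + ‖τ‖) ^ (-(1 / 2) : ℝ)) (.ofReal p')) *
        (∫⁻ τ, ENNReal.ofReal ((1 + |τ - a|) * ‖f τ‖ ^ 2)) ^ (1 / 2 : ℝ) := by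
  have hp0 := hpp'.pos
  have hp'0 := hpp'.symm.pos
  have p_inv_add_p'_inv := hpp'.inv_add_inv_eq_one
  set q : ℝ := (p'⁻¹ + 2⁻¹)⁻¹ with q_def
  have hq : 1 ≤ q := (one_le_inv₀ (by positivity)).2 (by linarith [inv_anti₀ hp0 hp2])
  have triple : p'.HolderTriple 2 q := ⟨by rw [q_def, inv_inv], hp'0, two_pos⟩
  have ennreal_triple : ENNReal.HolderTriple (.ofReal p') 2 (.ofReal q) := by
    simpa only [ENNReal.ofReal_ofNat] using triple.ennrealOfReal
  have young := eLpNorm_convolution_le (μ := volume) (lsmul ℝ ℝ) hpp'.lt.le hq two_pos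
    (by rw [q_def, inv_inv]; linarith) (measurable_timeCutoffKernel δ).aestronglyMeasurable hf
  have hoelder : eLpNorm f (.ofReal q) ≤ eLpNorm (fun τ : ℝ => (1 + ‖τ‖) ^ (-(1 / 2) : ℝ))
      (.ofReal p') * (∫⁻ τ, ENNReal.ofReal ((1 + |τ - a|) * ‖f τ‖ ^ 2)) ^ (1 / 2 : ℝ) := by
    rw [← eLpNorm_two_rpow_half_smul volume (fun _ => by positivity)]
    exact eLpNorm_le_eLpNorm_one_add_norm_rpow_mul (1 / 2) a hf
  have kernel_exponent : 1 - p⁻¹ = p'⁻¹ := by linarith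
  rw [ENNReal.ofReal_ofNat, eLpNorm_timeCutoffKernel hδ, ← ENNReal.ofReal_inv_of_pos hp0,
    ENNReal.toReal_ofReal (by positivity), kernel_exponent] at young
  have convolution_eq : (fun τ => ∫ σ, timeCutoffKernel δ (τ - σ) • f σ) =
      timeCutoffKernel δ ⋆[lsmul ℝ ℝ] f := by
    ext τ
    rw [convolution_eq_swap]
    rfl
  rw [convolution_eq]
  refine (young.trans (mul_le_mul' opENorm_lsmul_le (mul_le_mul_right hoelder _))).trans_eq ?_
  ring

theorem stmt_16_general [CompleteSpace E] {ε : ℝ} (hε0 : 0 < ε) (hε : ε < 1 / 2) :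
    ∃ C : ℝ, 0 < C ∧ ∀ δ : ℝ, 0 < δ → ∀ a : ℝ, ∀ f : ℝ → E, AEStronglyMeasurable f →
      eLpNorm (fun τ => ∫ σ, timeCutoffKernel δ (τ - σ) • f σ) 2 ≤
        ENNReal.ofReal (C * δ ^ (1 / 2 - ε)) *
          (∫⁻ τ, ENNReal.ofReal ((1 + |τ - a|) * ‖f τ‖ ^ 2)) ^ (1 / 2 : ℝ) := by
  set p : ℝ := (1 / 2 + ε)⁻¹
  set p' : ℝ := (1 / 2 - ε)⁻¹ with p'_def
  have hp : 1 < p := (one_lt_inv₀ (by linarith)).2 (by linarith)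
  have hp2 : p ≤ 2 := inv_le_of_inv_le₀ two_pos (by linarith)
  have hp' : 2 < p' := (lt_inv_comm₀ two_pos (by linarith)).2 (by linarith)
  have hpp' : p.HolderConjugate p' := by
    rw [Real.holderConjugate_iff, inv_inv, inv_inv]
    exact ⟨hp, by ring⟩
  set M := eLpNorm (timeCutoffKernel 1) (.ofReal p) *
    eLpNorm (fun τ : ℝ => (1 + ‖τ‖) ^ (-(1 / 2) : ℝ)) (.ofReal p')
  have memLp_kernel : MemLp (timeCutoffKernel 1) (.ofReal p) :=
    memLp_timeCutoffKernel_one (by rwa [ENNReal.toReal_ofReal hpp'.nonneg])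
  have memLp_weight : MemLp (fun τ : ℝ => (1 + ‖τ‖) ^ (-(1 / 2) : ℝ)) (.ofReal p') := by
    refine memLp_one_add_norm_rpow_neg volume ?_
    rw [finrank_self, Nat.cast_one, ENNReal.toReal_ofReal hpp'.symm.nonneg]
    linarith
  have hM : M ≠ ∞ := ENNReal.mul_ne_top memLp_kernel.eLpNorm_ne_top memLp_weight.eLpNorm_ne_top
  refine ⟨M.toReal + 1, by positivity, fun δ hδ a f hf => ?_⟩
  refine (eLpNorm_two_integral_timeCutoffKernel_smul_le hpp' hp2 hδ a hf).trans ?_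
  gcongr
  rw [p'_def, inv_inv, mul_comm, ENNReal.ofReal_mul (by positivity)]
  gcongr
  exact (ENNReal.le_ofReal_iff_toReal_le hM (by positivity)).2 (by linarith)

/-- Fiberwise time-localization estimate: for `0 < ε < 1/2` there is `C > 0` such that for
all `0 < δ ≤ 1`, all `a ∈ ℝ` and all `f` with `∫ (1+|τ-a|)|f(τ)|² dτ < ∞`,
`‖K_δ * f‖_{L²(ℝ)} ≤ C δ^{1/2-ε} ( ∫ (1+|τ-a|)|f(τ)|² dτ )^{1/2}`,
where `K_δ(τ) = 2 sin(δτ)/τ` is the Fourier transform of `χ_{[-δ,δ]}`. -/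
theorem stmt_16 (ε : ℝ) (hε0 : 0 < ε) (hε : ε < 1/2) :
    ∃ C : ℝ, 0 < C ∧
      ∀ δ : ℝ, 0 < δ → δ ≤ 1 →
        ∀ a : ℝ, ∀ f : ℝ → ℂ, Measurable f →
          (∫⁻ τ : ℝ, ENNReal.ofReal ((1 + |τ - a|) * ‖f τ‖ ^ 2)) ≠ ⊤ →
          eLpNorm
              (fun τ : ℝ => ∫ σ' : ℝ,
                ((2 * Real.sin (δ * (τ - σ')) / (τ - σ') : ℝ) : ℂ) * f σ')
              2 volume
            ≤ ENNReal.ofReal (C * δ ^ (1/2 - ε)) *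
              (∫⁻ τ : ℝ, ENNReal.ofReal ((1 + |τ - a|) * ‖f τ‖ ^ 2)) ^ ((1 : ℝ) / 2) := by
  obtain ⟨C, hC, bound⟩ := stmt_16_general (E := ℂ) hε0 hε
  exact ⟨C, hC, fun δ hδ _ a f hf _ => bound δ hδ a f hf.aestronglyMeasurable⟩
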